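/- Fix M > 0 and Q ∈ ℝ with Q² < M², and let α = (3M + √(9M² − 8Q²))/2 be the photon-sphere radius, the unique critical point of the angular potential V_L in (r₊, ∞). Then the critical points of V + c·V_L converge to α as c → ∞: for every δ > 0 there exists c₀ ≥ 0 such that for all c ≥ c₀, every r ∈ (r₊, ∞) with d(V + c·V_L)/dr (r) = 0 satisfies |r − α| < δ. -/

import Mathlib

/-!
A critical point `r` of `V + c·V_L` satisfies `P_Q(r) + c·P_L(r) = 0`. By Vieta,
`P_L(r) = r²(r - α)(r - (3M - α))`, and `3M - α ≤ M` gives `|P_L(r)| ≥ r²(r - M)|r - α|`. On the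
other side, `M² - Q² ≤ (r - M)²` outside the horizon, and the constant and linear Taylor
coefficients of `P_Q` at `M` are multiples of `M² - Q²`; this yields `|P_Q(r)| ≤ 3M r²(r - M)`.
The factor `r²(r - M)`, which is not bounded away from zero near extremality, cancels and leaves
`c|r - α| ≤ 3M`.
-/

namespace ReissnerNordstrom

variable {M Q r c : ℝ}

/-- The function `F` of the Reissner–Nordström metric with mass `M` and charge `Q`. -/
noncomputable def metricFn (M Q r : ℝ) : ℝ := 1 - 2 * M / r + Q ^ 2 / r ^ 2

/-- The derivative `F'` of `metricFn`, as an explicit formula so that `potential` is a rational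
function; see `hasDerivAt_metricFn`. -/
noncomputable def metricFnDeriv (M Q r : ℝ) : ℝ := 2 * M / r ^ 2 - 2 * Q ^ 2 / r ^ 3

/-- The potential `V = r⁻¹ F F'`. -/
noncomputable def potential (M Q r : ℝ) : ℝ := r⁻¹ * metricFn M Q r * metricFnDeriv M Q r

/-- The angular potential `V_L = F / r²`. -/
noncomputable def angularPotential (M Q r : ℝ) : ℝ := metricFn M Q r / r ^ 2

/-- The polynomial `P_Q`, the numerator of the derivative of `potential` up to the factor `-2`. -/
def potentialPoly (M Q r : ℝ) : ℝ :=
  3 * M * r ^ 3 - 4 * (Q ^ 2 + 2 * M ^ 2) * r ^ 2 + 15 * M * Q ^ 2 * r - 6 * Q ^ 4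

/-- The polynomial `P_L`, the numerator of the derivative of `angularPotential` up to the
factor `-2`, over the same denominator `r⁷` as for `potentialPoly`. -/
def angularPoly (M Q r : ℝ) : ℝ := r ^ 4 - 3 * M * r ^ 3 + 2 * Q ^ 2 * r ^ 2

/-- The radius `r₊` of the outer horizon, meaningful for `Q² ≤ M²` (it is `M` otherwise). -/
noncomputable def horizonRadius (M Q : ℝ) : ℝ := M + √(M ^ 2 - Q ^ 2)

/-- The photon-sphere radius `α`, meaningful for `8 Q² ≤ 9 M²`. -/
noncomputable def photonRadius (M Q : ℝ) : ℝ := (3 * M + √(9 * M ^ 2 - 8 * Q ^ 2)) / 2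

theorem hasDerivAt_metricFn (hr : r ≠ 0) :
    HasDerivAt (metricFn M Q) (metricFnDeriv M Q r) r := by
  refine ((((hasDerivAt_const r (2 * M)).div (hasDerivAt_id' r) hr).const_sub 1).add
    ((hasDerivAt_const r (Q ^ 2)).div (hasDerivAt_pow 2 r) (pow_ne_zero 2 hr))).congr_deriv ?_
  simp only [metricFnDeriv]
  field_simp
  ring

theorem hasDerivAt_metricFnDeriv (hr : r ≠ 0) :
    HasDerivAt (metricFnDeriv M Q) (-4 * M / r ^ 3 + 6 * Q ^ 2 / r ^ 4) r := by
  refine (((hasDerivAt_const r (2 * M)).div (hasDerivAt_pow 2 r) (pow_ne_zero 2 hr)).sub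
    ((hasDerivAt_const r (2 * Q ^ 2)).div (hasDerivAt_pow 3 r) (pow_ne_zero 3 hr))).congr_deriv ?_
  field_simp
  ring

theorem hasDerivAt_potential (hr : r ≠ 0) :
    HasDerivAt (potential M Q) (-2 * potentialPoly M Q r / r ^ 7) r := by
  refine (((hasDerivAt_inv hr).mul (hasDerivAt_metricFn hr)).mul
    (hasDerivAt_metricFnDeriv hr)).congr_deriv ?_
  simp only [metricFn, metricFnDeriv, potentialPoly, Pi.mul_apply]
  field_simp
  ring

theorem hasDerivAt_angularPotential (hr : r ≠ 0) :
    HasDerivAt (angularPotential M Q) (-2 * angularPoly M Q r / r ^ 7) r := by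
  refine ((hasDerivAt_metricFn hr).div (hasDerivAt_pow 2 r) (pow_ne_zero 2 hr)).congr_deriv ?_
  simp only [metricFn, metricFnDeriv, angularPoly]
  field_simp
  ring

theorem deriv_potential_add_mul_angularPotential_eq_zero_iff (hr : r ≠ 0) :
    deriv (fun x ↦ potential M Q x + c * angularPotential M Q x) r = 0 ↔
      potentialPoly M Q r + c * angularPoly M Q r = 0 := by
  have hderiv : deriv (fun x ↦ potential M Q x + c * angularPotential M Q x) r =
      -2 / r ^ 7 * (potentialPoly M Q r + c * angularPoly M Q r) := by
    rw [((hasDerivAt_potential hr).fun_add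
      ((hasDerivAt_angularPotential hr).const_mul c)).deriv]
    ring
  rw [hderiv, mul_eq_zero_iff_left (div_ne_zero (by norm_num) (pow_ne_zero 7 hr))]

theorem le_horizonRadius : M ≤ horizonRadius M Q :=
  le_add_of_nonneg_right (Real.sqrt_nonneg _)

theorem sq_sub_sq_le_sq_sub_of_horizonRadius_le (hr : horizonRadius M Q ≤ r) :
    M ^ 2 - Q ^ 2 ≤ (r - M) ^ 2 :=
  (Real.sqrt_le_left (sub_nonneg.2 (le_horizonRadius.trans hr))).1 (le_sub_iff_add_le'.2 hr)

theorem two_mul_le_photonRadius (hQ : Q ^ 2 ≤ M ^ 2) : 2 * M ≤ photonRadius M Q := by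
  have hsqrt : M ≤ √(9 * M ^ 2 - 8 * Q ^ 2) := Real.le_sqrt_of_sq_le (by linarith)
  unfold photonRadius
  linarith

theorem angularPoly_eq_mul (hQ : 8 * Q ^ 2 ≤ 9 * M ^ 2) :
    angularPoly M Q r =
      r ^ 2 * ((r - photonRadius M Q) * (r - (3 * M - photonRadius M Q))) := by
  have hsqrt : √(9 * M ^ 2 - 8 * Q ^ 2) ^ 2 = 9 * M ^ 2 - 8 * Q ^ 2 :=
    Real.sq_sqrt (sub_nonneg.2 hQ)
  simp only [angularPoly, photonRadius]
  linear_combination r ^ 2 / 4 * hsqrt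

theorem mul_abs_sub_photonRadius_le_abs_angularPoly (hQ : Q ^ 2 ≤ M ^ 2) :
    r ^ 2 * (r - M) * |r - photonRadius M Q| ≤ |angularPoly M Q r| := by
  have hroot : r - M ≤ |r - (3 * M - photonRadius M Q)| :=
    le_trans (by linarith [two_mul_le_photonRadius hQ]) (le_abs_self _)
  calc r ^ 2 * (r - M) * |r - photonRadius M Q|
      = r ^ 2 * (|r - photonRadius M Q| * (r - M)) := by ring
    _ ≤ r ^ 2 * (|r - photonRadius M Q| * |r - (3 * M - photonRadius M Q)|) := by gcongr
    _ = |angularPoly M Q r| := by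
      rw [angularPoly_eq_mul (by linarith [sq_nonneg M]), abs_mul, abs_mul,
        abs_of_nonneg (sq_nonneg r)]

theorem potentialPoly_eq_taylor :
    potentialPoly M Q r =
      (M ^ 2 - Q ^ 2) * M ^ 2 - 6 * (M ^ 2 - Q ^ 2) ^ 2 - 7 * M * (M ^ 2 - Q ^ 2) * (r - M)
        + (4 * (M ^ 2 - Q ^ 2) - 3 * M ^ 2) * (r - M) ^ 2 + 3 * M * (r - M) ^ 3 := by
  unfold potentialPoly
  ring

theorem abs_potentialPoly_le (hM : 0 ≤ M) (hQ : Q ^ 2 ≤ M ^ 2) (hr : horizonRadius M Q ≤ r) :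
    |potentialPoly M Q r| ≤ 3 * M * (r ^ 2 * (r - M)) := by
  obtain ⟨u, rfl⟩ : ∃ u, r = M + u := ⟨r - M, by ring⟩
  obtain ⟨q, hq⟩ : ∃ q, q = M ^ 2 - Q ^ 2 := ⟨_, rfl⟩
  have hu : 0 ≤ u := by linarith [le_horizonRadius.trans hr]
  have hq₀ : 0 ≤ q := by linarith
  have hqM : 0 ≤ M ^ 2 - q := by linarith [sq_nonneg Q]
  have hqu : 0 ≤ u ^ 2 - q := by
    linarith [sq_sub_sq_le_sq_sub_of_horizonRadius_le hr, add_sub_cancel_left M u]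
  rw [potentialPoly_eq_taylor, ← hq, add_sub_cancel_left, abs_le]
  -- `3M(M + u)²u ± P_Q(M + u)`, expanded in the nonnegative `M`, `u`, `q`, `M² - q`, `u² - q`.
  constructor
  · have : 0 ≤ M ^ 2 * q + M ^ 2 * u ^ 2 + 2 * M ^ 3 * u + 6 * q * (u ^ 2 - q)
        + 6 * M * u * (u ^ 2 - q) + 2 * u ^ 2 * (M ^ 2 - q) + M * u * (M ^ 2 - q) := by
      positivity
    linarith
  · have : 0 ≤ 3 * M ^ 3 * u + 4 * M ^ 2 * u ^ 2 + 6 * q ^ 2 + 7 * M * q * u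
        + M ^ 2 * (u ^ 2 - q) + 4 * u ^ 2 * (M ^ 2 - q) := by
      positivity
    linarith

theorem mul_abs_sub_photonRadius_le (hM : 0 ≤ M) (hQ : Q ^ 2 ≤ M ^ 2) (hc : 0 ≤ c)
    (hr : horizonRadius M Q < r)
    (hcrit : potentialPoly M Q r + c * angularPoly M Q r = 0) :
    c * |r - photonRadius M Q| ≤ 3 * M := by
  have hMr : M < r := le_horizonRadius.trans_lt hr
  have hfactor : 0 < r ^ 2 * (r - M) := mul_pos (pow_pos (hM.trans_lt hMr) 2) (sub_pos.2 hMr)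
  refine le_of_mul_le_mul_right ?_ hfactor
  calc c * |r - photonRadius M Q| * (r ^ 2 * (r - M))
      = c * (r ^ 2 * (r - M) * |r - photonRadius M Q|) := by ring
    _ ≤ c * |angularPoly M Q r| := by
      gcongr
      exact mul_abs_sub_photonRadius_le_abs_angularPoly hQ
    _ = |potentialPoly M Q r| := by
      rw [eq_neg_of_add_eq_zero_left hcrit, abs_neg, abs_mul, abs_of_nonneg hc]
    _ ≤ 3 * M * (r ^ 2 * (r - M)) := abs_potentialPoly_le hM hQ hr.le

end ReissnerNordstrom

open ReissnerNordstrom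

theorem stmt16_general (M Q : ℝ) (hM : 0 ≤ M) (hQ : Q ^ 2 ≤ M ^ 2)
    (rp α : ℝ) (hrp : rp = M + √(M ^ 2 - Q ^ 2))
    (hα : α = (3 * M + √(9 * M ^ 2 - 8 * Q ^ 2)) / 2)
    (F V VL : ℝ → ℝ)
    (hF : ∀ r, F r = 1 - 2 * M / r + Q ^ 2 / r ^ 2)
    (hV : ∀ r, V r = r⁻¹ * F r * (2 * M / r ^ 2 - 2 * Q ^ 2 / r ^ 3))
    (hVL : ∀ r, VL r = F r / r ^ 2) :
    ∀ c > 0, ∀ r ∈ Set.Ioi rp,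
      deriv (fun x ↦ V x + c * VL x) r = 0 → |r - α| ≤ 3 * M / c := by
  obtain rfl : F = metricFn M Q := funext hF
  obtain rfl : V = potential M Q := funext hV
  obtain rfl : VL = angularPotential M Q := funext hVL
  subst hrp hα
  intro c hc r hr hderiv
  have hr₀ : r ≠ 0 := (hM.trans le_horizonRadius |>.trans_lt hr).ne'
  rw [le_div_iff₀' hc]
  exact mul_abs_sub_photonRadius_le hM hQ hc.le hr
    ((deriv_potential_add_mul_angularPotential_eq_zero_iff hr₀).1 hderiv)

/-- Subcritical Reissner–Nordström: the critical points of `V + c·V_L` in the exterior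
region converge to the photon-sphere radius `α = (3M + √(9M² − 8Q²))/2` as `c → ∞`. -/
theorem stmt16 (M Q : ℝ) (hM : 0 < M) (hQ : Q^2 < M^2)
    (rp α : ℝ) (hrp : rp = M + Real.sqrt (M^2 - Q^2))
    (hα : α = (3*M + Real.sqrt (9*M^2 - 8*Q^2))/2)
    (F V VL : ℝ → ℝ)
    (hF : ∀ r, F r = 1 - 2*M/r + Q^2/r^2)
    (hV : ∀ r, V r = r⁻¹ * F r * (2*M/r^2 - 2*Q^2/r^3))
    (hVL : ∀ r, VL r = F r / r^2) :
    ∀ δ > 0, ∃ c₀ : ℝ, 0 ≤ c₀ ∧ ∀ c, c₀ ≤ c → ∀ r ∈ Set.Ioi rp,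
      deriv (fun x => V x + c * VL x) r = 0 → |r - α| < δ := by
  refine fun δ hδ ↦ ⟨3 * M / δ + 1, by positivity, fun c hc r hr hderiv ↦ ?_⟩
  have hMδ : 3 * M / δ < c := by linarith
  have hc_pos : 0 < c := lt_trans (by positivity) hMδ
  exact (stmt16_general M Q hM.le hQ.le rp α hrp hα F V VL hF hV hVL c hc_pos r hr hderiv).trans_lt
    ((div_lt_comm₀ hδ hc_pos).1 hMδ)
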